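/- Let q₀ be a positive real number, let C > 0, and let μ ∈ ℂ with Re μ > 0. Assume θ₂(iν) ≠ 0, θ₃(iν) ≠ 0 and θ₄(iν) ≠ 0 for every ν with Re ν > 0. Then ã₀[q₀](iμ+1) = ã₀[q₀−i](iμ) and ã₀[q₀](i/μ) = −q₀⁴ μ² ã₀[1/q₀](iμ). -/

import Mathlib

noncomputable section

/-- The theta function with characteristics `θ[p,q](iμ)`. -/
def theta (p q μ : ℂ) : ℂ :=
  ∑' m : ℤ, Complex.exp (-(Real.pi : ℂ) * ((m : ℂ) + p) ^ 2 * μ +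
    2 * (Real.pi : ℂ) * Complex.I * ((m : ℂ) + p) * q)

/-- The characteristic derivative `∂qθ[p,q](iμ)`. -/
def thetaQ (p q μ : ℂ) : ℂ :=
  2 * (Real.pi : ℂ) * Complex.I *
    ∑' m : ℤ, ((m : ℂ) + p) * Complex.exp (-(Real.pi : ℂ) * ((m : ℂ) + p) ^ 2 * μ +
      2 * (Real.pi : ℂ) * Complex.I * ((m : ℂ) + p) * q)

/-- The n-th μ-derivative `∂μⁿθ[p,q](iμ)`, given by its absolutely convergent series. -/
def thetaD (n : ℕ) (p q μ : ℂ) : ℂ :=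
  (-(Real.pi : ℂ)) ^ n *
    ∑' m : ℤ, ((m : ℂ) + p) ^ (2 * n) *
      Complex.exp (-(Real.pi : ℂ) * ((m : ℂ) + p) ^ 2 * μ +
        2 * (Real.pi : ℂ) * Complex.I * ((m : ℂ) + p) * q)

/-- The n-th μ-derivative `∂μⁿ∂qθ[p,q](iμ)`, given by its absolutely convergent series. -/
def thetaQD (n : ℕ) (p q μ : ℂ) : ℂ :=
  2 * Complex.I * (-1 : ℂ) ^ n * (Real.pi : ℂ) ^ (n + 1) *
    ∑' m : ℤ, ((m : ℂ) + p) ^ (2 * n + 1) *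
      Complex.exp (-(Real.pi : ℂ) * ((m : ℂ) + p) ^ 2 * μ +
        2 * (Real.pi : ℂ) * Complex.I * ((m : ℂ) + p) * q)

/-- The constant `C(j|n) = (−i)ⁿ n! / (2ʲ (n−2j)! (2j)!!)` with `(2j)!! = 2ʲ j!`. -/
def Ccoef (j n : ℕ) : ℂ :=
  (-Complex.I) ^ n * (n.factorial : ℂ) /
    ((2 : ℂ) ^ j * ((n - 2 * j).factorial : ℂ) * ((2 : ℂ) ^ j * (j.factorial : ℂ)))

/-- `w₁[p,q](iμ)` of the two-parametric family. -/
def w1 (p q μ : ℂ) : ℂ :=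
  -(Complex.I / 2) * theta 0 0 μ * theta 0 (1 / 2) μ * thetaQ p (q + 1 / 2) μ /
    (Complex.exp ((Real.pi : ℂ) * Complex.I * p) * theta p q μ)

/-- `w₂[p,q](iμ)` of the two-parametric family. -/
def w2 (p q μ : ℂ) : ℂ :=
  (Complex.I / 2) * theta (1 / 2) 0 μ * theta 0 (1 / 2) μ *
    thetaQ (p + 1 / 2) (q + 1 / 2) μ /
    (Complex.exp ((Real.pi : ℂ) * Complex.I * p) * theta p q μ)

/-- `w₃[p,q](iμ)` of the two-parametric family. -/
def w3 (p q μ : ℂ) : ℂ :=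
  -(1 / 2 : ℂ) * theta (1 / 2) 0 μ * theta 0 0 μ * thetaQ (p + 1 / 2) q μ / theta p q μ

/-- The conformal factor `F[p,q](iμ)` of the two-parametric family. -/
def Ftwo (Λ p q μ : ℂ) : ℂ :=
  (2 / ((Real.pi : ℂ) * Λ)) * (theta p q μ / thetaQ p q μ) ^ 2

/-- `w₁[q₀](iμ)` of the one-parametric family. -/
def v1 (q0 μ : ℂ) : ℂ := 1 / (μ + q0) + 2 * thetaD 1 (1 / 2) 0 μ / theta (1 / 2) 0 μ

/-- `w₂[q₀](iμ)` of the one-parametric family. -/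
def v2 (q0 μ : ℂ) : ℂ := 1 / (μ + q0) + 2 * thetaD 1 0 0 μ / theta 0 0 μ

/-- `w₃[q₀](iμ)` of the one-parametric family. -/
def v3 (q0 μ : ℂ) : ℂ := 1 / (μ + q0) + 2 * thetaD 1 0 (1 / 2) μ / theta 0 (1 / 2) μ

/-- The conformal factor `F[q₀](iμ) = C(μ+q₀)²` of the one-parametric family. -/
def Fone (C q0 μ : ℂ) : ℂ := C * (μ + q0) ^ 2

/-- The Seeley–de Witt coefficient `ã₀[p,q](iμ)` of the two-parametric family. -/
def a0two (Λ p q μ : ℂ) : ℂ :=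
  4 * Ftwo Λ p q μ ^ 2 * w1 p q μ * w2 p q μ * w3 p q μ

/-- The Seeley–de Witt coefficient `ã₀[q₀](iμ)` of the one-parametric family. -/
def a0one (C q0 μ : ℂ) : ℂ :=
  4 * Fone C q0 μ ^ 2 * v1 q0 μ * v2 q0 μ * v3 q0 μ

/-- The Seeley–de Witt coefficient `ã₂[p,q](iμ)` of the two-parametric family. -/
def a2two (Λ p q μ : ℂ) : ℂ :=
  -(Ftwo Λ p q μ / 3) * (w1 p q μ ^ 2 + w2 p q μ ^ 2 + w3 p q μ ^ 2) +
  (Ftwo Λ p q μ / 6) *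
    ((w1 p q μ ^ 2 * w2 p q μ ^ 2 - deriv (w3 p q) μ ^ 2) / w3 p q μ ^ 2 +
     (w1 p q μ ^ 2 * w3 p q μ ^ 2 - deriv (w2 p q) μ ^ 2) / w2 p q μ ^ 2 +
     (w2 p q μ ^ 2 * w3 p q μ ^ 2 - deriv (w1 p q) μ ^ 2) / w1 p q μ ^ 2) -
  (Ftwo Λ p q μ / 3) *
    (deriv (w1 p q) μ * deriv (w2 p q) μ / (w1 p q μ * w2 p q μ) +
     deriv (w1 p q) μ * deriv (w3 p q) μ / (w1 p q μ * w3 p q μ) +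
     deriv (w2 p q) μ * deriv (w3 p q) μ / (w2 p q μ * w3 p q μ)) +
  (Ftwo Λ p q μ / 3) *
    (iteratedDeriv 2 (w1 p q) μ / w1 p q μ + iteratedDeriv 2 (w2 p q) μ / w2 p q μ +
     iteratedDeriv 2 (w3 p q) μ / w3 p q μ) -
  deriv (Ftwo Λ p q) μ ^ 2 / (2 * Ftwo Λ p q μ) + iteratedDeriv 2 (Ftwo Λ p q) μ


lemma aux_norm (p q : ℝ) (ν : ℂ) (m : ℤ) :
    ‖Complex.exp (-(Real.pi : ℂ) * ((m : ℂ) + p) ^ 2 * ν +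
      2 * (Real.pi : ℂ) * Complex.I * ((m : ℂ) + p) * q)‖ =
      Real.exp (-Real.pi * ((m : ℝ) + p) ^ 2 * ν.re) := by
  rw [Complex.norm_exp]
  congr 1
  have h1 : (-(Real.pi : ℂ) * ((m : ℂ) + p) ^ 2 * ν +
      2 * (Real.pi : ℂ) * Complex.I * ((m : ℂ) + p) * q) =
      ((-Real.pi * ((m : ℝ) + p) ^ 2 : ℝ) : ℂ) * ν +
        ((2 * Real.pi * ((m : ℝ) + p) * q : ℝ) : ℂ) * Complex.I := by
    push_cast; ring
  rw [h1]
  simp only [Complex.add_re, Complex.re_ofReal_mul, Complex.I_re]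
  ring

lemma aux_term (p q μ : ℂ) (m : ℤ) :
    Complex.exp (-(Real.pi : ℂ) * ((m : ℂ) + p) ^ 2 * μ +
      2 * (Real.pi : ℂ) * Complex.I * ((m : ℂ) + p) * q) =
    Complex.exp (-(Real.pi : ℂ) * p ^ 2 * μ + 2 * (Real.pi : ℂ) * Complex.I * p * q) *
      jacobiTheta₂_term m (q + Complex.I * p * μ) (Complex.I * μ) := by
  rw [jacobiTheta₂_term, ← Complex.exp_add]
  congr 1
  linear_combination (2 * (Real.pi : ℂ) * m * p * μ + (Real.pi : ℂ) * m ^ 2 * μ) *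
    (-Complex.I_sq)

lemma aux_theta (p q μ : ℂ) :
    theta p q μ = Complex.exp (-(Real.pi : ℂ) * p ^ 2 * μ + 2 * (Real.pi : ℂ) * Complex.I * p * q) *
      jacobiTheta₂ (q + Complex.I * p * μ) (Complex.I * μ) := by
  rw [theta, jacobiTheta₂, ← tsum_mul_left]
  exact tsum_congr fun m => aux_term p q μ m

lemma aux_summable (p q μ : ℂ) (hμ : 0 < μ.re) :
    Summable fun m : ℤ => Complex.exp (-(Real.pi : ℂ) * ((m : ℂ) + p) ^ 2 * μ +
      2 * (Real.pi : ℂ) * Complex.I * ((m : ℂ) + p) * q) := by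
  simp_rw [aux_term]
  apply Summable.mul_left
  rw [summable_jacobiTheta₂_term_iff]
  simpa using hμ

lemma aux_hasDerivAt (p q : ℝ) (μ : ℂ) (hμ : 0 < μ.re) :
    HasDerivAt (theta p q) (thetaD 1 p q μ) μ := by
  set F : ℤ → ℂ → ℂ := fun m ν => Complex.exp (-(Real.pi : ℂ) * ((m : ℂ) + p) ^ 2 * ν +
      2 * (Real.pi : ℂ) * Complex.I * ((m : ℂ) + p) * q) with hF
  have hFd : ∀ m ν, HasDerivAt (F m) (-(Real.pi : ℂ) * ((m : ℂ) + p) ^ 2 * F m ν) ν := by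
    intro m ν
    have := (((hasDerivAt_id ν).const_mul (-(Real.pi : ℂ) * ((m : ℂ) + p) ^ 2)).add_const
      (2 * (Real.pi : ℂ) * Complex.I * ((m : ℂ) + p) * q)).cexp
    refine this.congr_deriv ?_
    simp only [hF, id, mul_one]
    ring
  set U : Set ℂ := {ν | μ.re / 2 < ν.re} with hU
  have hUo : IsOpen U := isOpen_lt continuous_const Complex.continuous_re
  have hmem : μ ∈ U := by change μ.re / 2 < μ.re; linarith
  have hs : Summable fun m : ℤ => Real.exp (-Real.pi * ((m : ℝ) + p) ^ 2 * (μ.re / 2)) := by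
    have := (aux_summable p q ((μ.re / 2 : ℝ) : ℂ) (by simpa using hμ)).norm
    simp_rw [aux_norm] at this
    simpa using this
  have hb : ∀ (m : ℤ) (ν : ℂ), ν ∈ U →
      ‖F m ν‖ ≤ Real.exp (-Real.pi * ((m : ℝ) + p) ^ 2 * (μ.re / 2)) := by
    intro m ν hν
    simp only [hF]
    rw [aux_norm]
    apply Real.exp_le_exp.mpr
    have hν' : μ.re / 2 < ν.re := hν
    have : 0 ≤ Real.pi * ((m : ℝ) + p) ^ 2 := by positivity
    nlinarith
  have hdo : ∀ m : ℤ, DifferentiableOn ℂ (F m) U := fun m ν _ =>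
    (hFd m ν).differentiableAt.differentiableWithinAt
  have h1 := Complex.hasSum_deriv_of_summable_norm hs hdo hUo hb hmem
  have h2 := (Complex.differentiableOn_tsum_of_summable_norm hs hdo hUo hb).differentiableAt
    (hUo.mem_nhds hmem)
  have h3 := h2.hasDerivAt
  rw [← h1.tsum_eq] at h3
  refine HasDerivAt.congr_deriv (f := theta p q) h3 ?_
  symm
  rw [thetaD, ← tsum_mul_left]
  refine tsum_congr fun m => ?_
  rw [(hFd m μ).deriv]
  simp only [hF]
  ring

lemma aux_re (μ : ℂ) (hμ : 0 < μ.re) : 0 < (1 / μ).re := by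
  have : μ ≠ 0 := by rintro rfl; simp at hμ
  rw [one_div, Complex.inv_re]
  exact div_pos hμ (Complex.normSq_pos.mpr this)

lemma aux_arg (μ : ℂ) (hμ : 0 < μ.re) : μ.arg ≠ Real.pi := by
  intro h
  have := (Complex.arg_eq_pi_iff.mp h).1
  linarith

/-- Logarithmic derivative of a weight one-half inversion formula. -/
lemma aux_inv (p q p1 q1 : ℝ) (μ : ℂ) (hμ : 0 < μ.re)
    (h0 : theta p q (1 / μ) ≠ 0) (h01 : theta p1 q1 μ ≠ 0)
    (h : ∀ ν : ℂ, 0 < ν.re → theta p q (1 / ν) = ν ^ (1 / 2 : ℂ) * theta p1 q1 ν) :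
    2 * thetaD 1 p q (1 / μ) / theta p q (1 / μ) =
      -μ - μ ^ 2 * (2 * thetaD 1 p1 q1 μ / theta p1 q1 μ) := by
  have hne : μ ≠ 0 := by rintro rfl; simp at hμ
  have d1 : HasDerivAt (fun ν : ℂ => theta p q (1 / ν))
      (thetaD 1 p q (1 / μ) * (-(μ ^ 2)⁻¹)) μ := by
    have hi : HasDerivAt (fun ν : ℂ => 1 / ν) (-(μ ^ 2)⁻¹) μ := by
      simpa using hasDerivAt_inv hne
    exact (aux_hasDerivAt p q (1 / μ) (aux_re μ hμ)).comp μ hi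
  have d2 : HasDerivAt (fun ν : ℂ => ν ^ (1 / 2 : ℂ) * theta p1 q1 ν)
      ((1 / 2 : ℂ) * μ ^ ((1 / 2 : ℂ) - 1) * 1 * theta p1 q1 μ +
        μ ^ (1 / 2 : ℂ) * thetaD 1 p1 q1 μ) μ :=
    ((hasDerivAt_id μ).cpow_const (Or.inl hμ)).mul (aux_hasDerivAt p1 q1 μ hμ)
  have ev : (fun ν : ℂ => theta p q (1 / ν)) =ᶠ[nhds μ]
      (fun ν : ℂ => ν ^ (1 / 2 : ℂ) * theta p1 q1 ν) := by
    filter_upwards [(isOpen_lt continuous_const Complex.continuous_re).mem_nhds hμ] with ν hν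
    exact h ν hν
  have e := (d1.congr_of_eventuallyEq ev.symm).unique d2
  have hc : μ ^ (1 / 2 : ℂ) ≠ 0 := by simp [Complex.cpow_eq_zero_iff, hne]
  rw [Complex.cpow_sub _ _ hne, Complex.cpow_one] at e
  rw [h μ hμ]
  generalize μ ^ (1 / 2 : ℂ) = c at *
  generalize thetaD 1 p q (1 / μ) = a at *
  field_simp at e ⊢
  linear_combination (-1 : ℂ) * e

lemma aux_f3 (ν : ℂ) (hν : 0 < ν.re) :
    theta 0 0 (1 / ν) = ν ^ (1 / 2 : ℂ) * theta 0 0 ν := by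
  have hne : ν ≠ 0 := by rintro rfl; simp at hν
  have hc : ν ^ (1 / 2 : ℂ) ≠ 0 := by simp [Complex.cpow_eq_zero_iff, hne]
  have e1 : -Complex.I * (Complex.I * ν) = ν := by
    linear_combination (-ν) * Complex.I_sq
  have e2 : -1 / (Complex.I * ν) = Complex.I * (1 / ν) := by
    field_simp; simp
  rw [aux_theta, aux_theta 0 0 ν]
  rw [show (0 : ℂ) + Complex.I * 0 * ν = 0 by ring, show (0 : ℂ) + Complex.I * 0 * (1 / ν) = 0 by ring,
    jacobiTheta₂_functional_equation 0 (Complex.I * ν), e1, e2]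
  simp
  field_simp

lemma aux_f2 (ν : ℂ) (hν : 0 < ν.re) :
    theta (1 / 2) 0 (1 / ν) = ν ^ (1 / 2 : ℂ) * theta 0 (1 / 2) ν := by
  have hne : ν ≠ 0 := by rintro rfl; simp at hν
  have hc : ν ^ (1 / 2 : ℂ) ≠ 0 := by simp [Complex.cpow_eq_zero_iff, hne]
  have e1 : -Complex.I * (Complex.I * ν) = ν := by
    linear_combination (-ν) * Complex.I_sq
  have e2 : -1 / (Complex.I * ν) = Complex.I * (1 / ν) := by
    field_simp; simp
  have e3 : (1 / 2 : ℂ) / (Complex.I * ν) = -(0 + Complex.I * (1 / 2) * (1 / ν)) := by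
    field_simp; simp
  have e4 : -(Real.pi : ℂ) * Complex.I * (1 / 2 : ℂ) ^ 2 / (Complex.I * ν) =
      -(Real.pi : ℂ) * (1 / 2) ^ 2 * (1 / ν) + 2 * (Real.pi : ℂ) * Complex.I * (1 / 2) * 0 := by
    field_simp; ring
  rw [aux_theta, aux_theta 0 (1 / 2) ν]
  rw [show (1 / 2 : ℂ) + Complex.I * 0 * ν = 1 / 2 by ring,
    jacobiTheta₂_functional_equation (1 / 2) (Complex.I * ν), e1, e2, e3, e4,
    jacobiTheta₂_neg_left,
    show -(Real.pi : ℂ) * 0 ^ 2 * ν + 2 * (Real.pi : ℂ) * Complex.I * 0 * (1 / 2) = 0 by ring,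
    Complex.exp_zero]
  field_simp

lemma aux_f4 (ν : ℂ) (hν : 0 < ν.re) :
    theta 0 (1 / 2) (1 / ν) = ν ^ (1 / 2 : ℂ) * theta (1 / 2) 0 ν := by
  have hne : ν ≠ 0 := by rintro rfl; simp at hν
  have hc : ν ^ (1 / 2 : ℂ) ≠ 0 := by simp [Complex.cpow_eq_zero_iff, hne]
  have h := aux_f2 (1 / ν) (aux_re ν hν)
  rw [one_div_one_div] at h
  rw [h, one_div ν, Complex.inv_cpow _ _ (aux_arg ν hν)]
  field_simp

lemma aux_exp_int (k : ℤ) : Complex.exp ((Real.pi : ℂ) * Complex.I * (2 * k)) = 1 := by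
  rw [Complex.exp_eq_one_iff]
  exact ⟨k, by ring⟩

lemma aux_exp_shift (a b : ℂ) (k : ℤ) (h : a = b + (Real.pi : ℂ) * Complex.I * (2 * k)) :
    Complex.exp a = Complex.exp b := by
  rw [h, Complex.exp_add, aux_exp_int, mul_one]

lemma aux_t2 (μ : ℂ) (m : ℤ) :
    Complex.exp (-(Real.pi : ℂ) * ((m : ℂ) + 1 / 2) ^ 2 * (μ - Complex.I) +
      2 * (Real.pi : ℂ) * Complex.I * ((m : ℂ) + 1 / 2) * 0) =
    Complex.exp ((Real.pi : ℂ) * Complex.I / 4) *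
    Complex.exp (-(Real.pi : ℂ) * ((m : ℂ) + 1 / 2) ^ 2 * μ +
      2 * (Real.pi : ℂ) * Complex.I * ((m : ℂ) + 1 / 2) * 0) := by
  obtain ⟨k, hk⟩ := Int.even_mul_succ_self m
  have hk' : (m : ℂ) * (m + 1) = k + k := by exact_mod_cast hk
  rw [← Complex.exp_add]
  apply aux_exp_shift _ _ k
  linear_combination (Real.pi : ℂ) * Complex.I * hk'

lemma aux_t3 (μ : ℂ) (m : ℤ) :
    Complex.exp (-(Real.pi : ℂ) * ((m : ℂ) + 0) ^ 2 * (μ - Complex.I) +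
      2 * (Real.pi : ℂ) * Complex.I * ((m : ℂ) + 0) * 0) =
    Complex.exp (-(Real.pi : ℂ) * ((m : ℂ) + 0) ^ 2 * μ +
      2 * (Real.pi : ℂ) * Complex.I * ((m : ℂ) + 0) * (1 / 2)) := by
  obtain ⟨k, hk⟩ := Int.even_mul_pred_self m
  have hk' : (m : ℂ) * (m - 1) = k + k := by exact_mod_cast hk
  apply aux_exp_shift _ _ k
  linear_combination (Real.pi : ℂ) * Complex.I * hk'

lemma aux_t4 (μ : ℂ) (m : ℤ) :
    Complex.exp (-(Real.pi : ℂ) * ((m : ℂ) + 0) ^ 2 * (μ - Complex.I) +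
      2 * (Real.pi : ℂ) * Complex.I * ((m : ℂ) + 0) * (1 / 2)) =
    Complex.exp (-(Real.pi : ℂ) * ((m : ℂ) + 0) ^ 2 * μ +
      2 * (Real.pi : ℂ) * Complex.I * ((m : ℂ) + 0) * 0) := by
  obtain ⟨k, hk⟩ := Int.even_mul_succ_self m
  have hk' : (m : ℂ) * (m + 1) = k + k := by exact_mod_cast hk
  apply aux_exp_shift _ _ k
  linear_combination (Real.pi : ℂ) * Complex.I * hk'

lemma aux_v1 (q0 μ : ℂ) : v1 q0 (μ - Complex.I) = v1 (q0 - Complex.I) μ := by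
  have hc : Complex.exp ((Real.pi : ℂ) * Complex.I / 4) ≠ 0 := Complex.exp_ne_zero _
  have ht : theta (1 / 2) 0 (μ - Complex.I) =
      Complex.exp ((Real.pi : ℂ) * Complex.I / 4) * theta (1 / 2) 0 μ := by
    rw [theta, theta, ← tsum_mul_left]
    exact tsum_congr fun m => aux_t2 μ m
  have hd : thetaD 1 (1 / 2) 0 (μ - Complex.I) =
      Complex.exp ((Real.pi : ℂ) * Complex.I / 4) * thetaD 1 (1 / 2) 0 μ := by
    rw [thetaD, thetaD, mul_left_comm]
    congr 1
    rw [← tsum_mul_left]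
    refine tsum_congr fun m => ?_
    rw [aux_t2 μ m]; ring
  rw [v1, v1, ht, hd, mul_left_comm 2, mul_div_mul_left _ _ hc]
  congr 2; ring

lemma aux_v2 (q0 μ : ℂ) : v2 q0 (μ - Complex.I) = v3 (q0 - Complex.I) μ := by
  rw [v2, v3, theta, theta, thetaD, thetaD]
  simp_rw [aux_t3 μ]
  congr 2; ring

lemma aux_v3 (q0 μ : ℂ) : v3 q0 (μ - Complex.I) = v2 (q0 - Complex.I) μ := by
  rw [v2, v3, theta, theta, thetaD, thetaD]
  simp_rw [aux_t4 μ]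
  congr 2; ring

/-- Modular transformation properties of the Seeley–de Witt coefficient
`ã₀[q₀] = 4F²w₁w₂w₃` of the one-parametric family under `iμ ↦ iμ+1` and `iμ ↦ i/μ`. -/
theorem statement18 (q0 : ℝ) (hq0 : 0 < q0) (C : ℝ) (hC : 0 < C) (μ : ℂ) (hμ : 0 < μ.re)
    (h2 : ∀ ν : ℂ, 0 < ν.re → theta (1 / 2) 0 ν ≠ 0)
    (h3 : ∀ ν : ℂ, 0 < ν.re → theta 0 0 ν ≠ 0)
    (h4 : ∀ ν : ℂ, 0 < ν.re → theta 0 (1 / 2) ν ≠ 0) :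
    a0one (C : ℂ) (q0 : ℂ) (μ - Complex.I) = a0one (C : ℂ) ((q0 : ℂ) - Complex.I) μ ∧
    a0one (C : ℂ) (q0 : ℂ) (1 / μ) = -(q0 : ℂ) ^ 4 * μ ^ 2 * a0one (C : ℂ) (1 / (q0 : ℂ)) μ := by
  have hne : μ ≠ 0 := by rintro rfl; simp at hμ
  have hq : (q0 : ℂ) ≠ 0 := by exact_mod_cast hq0.ne'
  constructor
  · rw [a0one, a0one, aux_v1, aux_v2, aux_v3, Fone, Fone]
    ring
  · have hs1 : 1 + (q0 : ℂ) * μ ≠ 0 := by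
      intro h
      have := congrArg Complex.re h
      simp at this
      nlinarith [mul_pos hq0 hμ]
    have hs2 : 1 / μ + (q0 : ℂ) ≠ 0 := by
      intro h; apply hs1; field_simp at h; linear_combination h
    have hs3 : μ + 1 / (q0 : ℂ) ≠ 0 := by
      intro h; apply hs1; field_simp at h; linear_combination h
    have key : 1 / (1 / μ + (q0 : ℂ)) - μ = -μ ^ 2 * (1 / (μ + 1 / (q0 : ℂ))) := by
      have a : 1 / (1 / μ + (q0 : ℂ)) = μ / (1 + q0 * μ) := by field_simp
      have b : 1 / (μ + 1 / (q0 : ℂ)) = q0 / (1 + q0 * μ) := by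
        field_simp
        ring
      have c : μ / (1 + (q0 : ℂ) * μ) * (1 + q0 * μ) = μ := div_mul_cancel₀ _ hs1
      have d : (q0 : ℂ) / (1 + (q0 : ℂ) * μ) * (1 + q0 * μ) = q0 := div_mul_cancel₀ _ hs1
      rw [a, b]
      apply mul_right_cancel₀ hs1
      linear_combination c + μ ^ 2 * d
    have g1 := aux_inv (1 / 2) 0 0 (1 / 2) μ hμ (by simpa using h2 _ (aux_re μ hμ))
      (by simpa using h4 μ hμ) (by simpa using aux_f2)
    have g2 := aux_inv 0 0 0 0 μ hμ (by simpa using h3 _ (aux_re μ hμ))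
      (by simpa using h3 μ hμ) (by simpa using aux_f3)
    have g3 := aux_inv 0 (1 / 2) (1 / 2) 0 μ hμ (by simpa using h4 _ (aux_re μ hμ))
      (by simpa using h2 μ hμ) (by simpa using aux_f4)
    push_cast at g1 g2 g3
    have k1 : v1 q0 (1 / μ) = -μ ^ 2 * v3 (1 / q0) μ := by
      rw [v1, v3, g1]; linear_combination key
    have k2 : v2 q0 (1 / μ) = -μ ^ 2 * v2 (1 / q0) μ := by
      rw [v2, v2, g2]; linear_combination key
    have k3 : v3 q0 (1 / μ) = -μ ^ 2 * v1 (1 / q0) μ := by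
      rw [v1, v3, g3]; linear_combination key
    rw [a0one, a0one, k1, k2, k3, Fone, Fone]
    have hF : 1 / μ + (q0 : ℂ) = q0 / μ * (μ + 1 / q0) := by
      field_simp; ring
    rw [hF]
    generalize μ + 1 / (q0 : ℂ) = s
    field_simp

end
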